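/- arXiv:2005.05238 — 5 statements merged into one kernel-verified Lean document; each statement's English description precedes it below -/
import Mathlib

section
/- Fixed points of the deterministic FedGD algorithm: Let f_1, ..., f_m : R^d -> R be differentiable functions, let s > 0 be a stepsize, and let e >= 1 be an integer. Define gradient maps G_j(x) = x - s*grad f_j(x) and let G_j^e denote the e-fold composition of G_j (with G_j^0 the identity). Suppose the FedGD iterates x_j^{(t+1)} = (1/m) * sum_{k=1}^m G_k^e(x_k^{(t)}) converge as t -> infinity. Then (a) all local sequences x_j^{(t)} converge to a common limit x* in R^d, and (b) this limit satisfies sum_{i=1}^{e} sum_{j=1}^m grad f_j(G_j^{i-1}(x*)) = 0. -/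
open Filter Finset
open Function Topology

/-!
The vector of local iterates converges to a fixed point of one communication round, by continuity.
A round hands every client the same average, so its fixed points are constant vectors; the constant
`z` is characterised by `∑ k, (z - G_k^e z) = 0`. Each displacement `z - G_k^e z` telescopes into
`s` times the sum of the gradients met along the local trajectory.
-/

theorem eq_iterate_of_forall_succ_eq {X : Type*} {Φ : X → X} {x : ℕ → X}
    (hstep : ∀ t, x (t + 1) = Φ (x t)) (t : ℕ) : x t = Φ^[t] (x 0) := by
  induction t with
  | zero => rfl
  | succ t ih => rw [hstep, ih, iterate_succ_apply']

theorem sub_iterate_eq_smul_sum {R E : Type*} [AddCommGroup E] [DistribSMul R E] {s : R}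
    {v g : E → E} (hg : ∀ y, g y = y - s • v y) (n : ℕ) (y : E) :
    y - g^[n] y = s • ∑ i ∈ range n, v (g^[i] y) := by
  have hdispl (i : ℕ) : g^[i] y - g^[i + 1] y = s • v (g^[i] y) := by
    rw [iterate_succ_apply', hg, sub_sub_cancel]
  calc y - g^[n] y
      = ∑ i ∈ range n, (g^[i] y - g^[i + 1] y) := (sum_range_sub' (fun i => g^[i] y) n).symm
    _ = ∑ i ∈ range n, s • v (g^[i] y) := sum_congr rfl fun i _ => hdispl i
    _ = s • ∑ i ∈ range n, v (g^[i] y) := smul_sum.symm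

section AveragingRound

variable (𝕜 : Type*) {ι E : Type*} [Fintype ι] [DivisionRing 𝕜] [AddCommGroup E] [Module 𝕜 E]

/-- One communication round of federated averaging: client `k` applies its local update `T k` to
its own state, and every client then receives the uniform average of the results. The state is the
vector of all clients' values, so that the FedGD recursion iterates a self-map of `ι → E`. -/
def averagingRound (T : ι → E → E) (y : ι → E) : ι → E :=
  fun _ => (Fintype.card ι : 𝕜)⁻¹ • ∑ k, T k (y k)

theorem continuous_averagingRound [TopologicalSpace E] [ContinuousAdd E] [ContinuousConstSMul 𝕜 E]
    {T : ι → E → E} (hT : ∀ k, Continuous (T k)) : Continuous (averagingRound 𝕜 T) :=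
  continuous_pi fun _ => (continuous_finsetSum _ fun k _ =>
    (hT k).comp (continuous_apply k)).const_smul _

theorem isFixedPt_averagingRound_const_iff [CharZero 𝕜] [Nonempty ι] {T : ι → E → E} {z : E} :
    IsFixedPt (averagingRound 𝕜 T) (const ι z) ↔ ∑ k, (z - T k z) = 0 := by
  have hcard : (Fintype.card ι : 𝕜) ≠ 0 := Nat.cast_ne_zero.2 Fintype.card_ne_zero
  calc IsFixedPt (averagingRound 𝕜 T) (const ι z)
      ↔ (Fintype.card ι : 𝕜)⁻¹ • ∑ k, T k z = z := const_inj
    _ ↔ ∑ k, T k z = (Fintype.card ι : 𝕜) • z := inv_smul_eq_iff₀ hcard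
    _ ↔ ∑ k, (z - T k z) = 0 := by
      rw [sum_sub_distrib, sum_const, card_univ, sub_eq_zero, Nat.cast_smul_eq_nsmul, eq_comm]

end AveragingRound

theorem fedgd_fixed_points_general
    {𝕜 ι E : Type*} [DivisionRing 𝕜] [CharZero 𝕜] [Fintype ι] [Nonempty ι]
    [AddCommGroup E] [Module 𝕜 E] [TopologicalSpace E] [T2Space E]
    [IsTopologicalAddGroup E] [ContinuousConstSMul 𝕜 E]
    {v : ι → E → E} (hv : ∀ j, Continuous (v j)) {s : 𝕜} (hs : s ≠ 0) (e : ℕ)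
    {G : ι → E → E} (hG : ∀ j y, G j y = y - s • v j y) {x : ℕ → ι → E}
    (hupdate : ∀ t j, x (t + 1) j = (Fintype.card ι : 𝕜)⁻¹ • ∑ k, (G k)^[e] (x t k))
    {xlim : ι → E} (hconv : ∀ j, Tendsto (fun t => x t j) atTop (𝓝 (xlim j))) :
    ∃ xstar : E, (∀ j, xlim j = xstar) ∧
      ∑ i ∈ range e, ∑ j, v j ((G j)^[i] xstar) = 0 := by
  have hGcont (k : ι) : Continuous (G k) :=
    (continuous_id.sub ((hv k).const_smul s)).congr fun y => (hG k y).symm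
  have hfixed : IsFixedPt (averagingRound 𝕜 fun k => (G k)^[e]) xlim :=
    isFixedPt_of_tendsto_iterate
      ((tendsto_pi_nhds.2 hconv).congr <|
        eq_iterate_of_forall_succ_eq fun t => funext (hupdate t))
      (continuous_averagingRound 𝕜 fun k => (hGcont k).iterate e).continuousAt
  obtain ⟨xstar, rfl⟩ : ∃ z, xlim = const ι z := ⟨_, hfixed.eq.symm⟩
  refine ⟨xstar, fun _ => rfl, (smul_eq_zero_iff_right hs).1 ?_⟩
  calc s • ∑ i ∈ range e, ∑ j, v j ((G j)^[i] xstar)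
      = ∑ j, s • ∑ i ∈ range e, v j ((G j)^[i] xstar) := by rw [sum_comm, smul_sum]
    _ = ∑ j, (xstar - (G j)^[e] xstar) :=
      sum_congr rfl fun j _ => (sub_iterate_eq_smul_sum (hG j) e xstar).symm
    _ = 0 := (isFixedPt_averagingRound_const_iff 𝕜).1 hfixed

/-- Fixed points of the deterministic FedGD algorithm (Proposition 1 of Pathak–Wainwright):
if the FedGD iterates `x_j^{(t+1)} = (1/m) ∑_k G_k^e (x_k^{(t)})` converge, then all local
sequences share a common limit `x*`, and this limit satisfies
`∑_{i=1}^{e} ∑_{j=1}^m ∇f_j (G_j^{i-1} x*) = 0`.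
(Sequences are indexed so that `x t` is the iterate at round `t`.) -/
theorem fedgd_fixed_points
    {d m : ℕ} (hm : 0 < m)
    (f : Fin m → EuclideanSpace ℝ (Fin d) → ℝ)
    (hdiff : ∀ j, Differentiable ℝ (f j))
    (hgradcont : ∀ j, Continuous (gradient (f j)))
    (s : ℝ) (hs : 0 < s)
    (e : ℕ) (he : 1 ≤ e)
    (G : Fin m → EuclideanSpace ℝ (Fin d) → EuclideanSpace ℝ (Fin d))
    (hG : ∀ j x, G j x = x - s • gradient (f j) x)
    (x : ℕ → Fin m → EuclideanSpace ℝ (Fin d))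
    (hupdate : ∀ t j, x (t + 1) j = (m : ℝ)⁻¹ • ∑ k, (G k)^[e] (x t k))
    (xlim : Fin m → EuclideanSpace ℝ (Fin d))
    (hconv : ∀ j, Tendsto (fun t => x t j) atTop (nhds (xlim j))) :
    ∃ xstar : EuclideanSpace ℝ (Fin d),
      (∀ j, xlim j = xstar) ∧
      ∑ i ∈ Finset.range e, ∑ j, gradient (f j) ((G j)^[i] xstar) = 0 := by
  have : NeZero m := ⟨hm.ne'⟩
  exact fedgd_fixed_points_general hgradcont hs.ne' e hG (by simpa using hupdate) hconv
end

section
/- Fixed points of the deterministic FedProx algorithm: Let f_1, ..., f_m : R^d -> R be convex differentiable functions and let s > 0. For each j let prox_{s f_j}(z) denote the unique minimizer over x in R^d of f_j(x) + (1/(2s))*||z - x||^2, and let M_{s f_j}(z) = inf_x { f_j(x) + (1/(2s))*||z - x||^2 } denote the Moreau envelope. Suppose the FedProx iterates x_j^{(t+1)} = (1/m) * sum_{k=1}^m prox_{s f_k}(x_k^{(t)}) converge as t -> infinity. Then (a) all local sequences x_j^{(t)} converge to a common limit x* in R^d, and (b) this limit satisfies sum_{j=1}^m grad M_{s f_j}(x*)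 = 0. -/
open Filter Finset

/-!
A proximal point `p` of `f` at `z` is characterised by `(z - p) / s ∈ ∂f(p)`. Monotonicity of the
subdifferential makes the proximal maps firmly nonexpansive, hence continuous, so one may pass to
the limit in the FedProx update: its right-hand side does not depend on the device, and the common
limit is the average of its own proximal points. The subgradient inequality also gives
`0 ≤ M w - M z - ⟪(z - p) / s, w - z⟫ ≤ ‖w - z‖² / (2s)`, so that `∇M z = (z - p) / s`, and the
fixed-point equation says that these gradients sum to zero.
-/

section Proximal

open scoped RealInnerProductSpace Topology

variable {E : Type*} [NormedAddCommGroup E] {f : E → ℝ} {s : ℝ} {z w p q : E}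

/-- `p` is a proximal point of `f` at `z` with stepsize `s`, i.e. `p = prox_{s f}(z)`. It is encoded
as a relation, so that no choice of minimizer enters. -/
def IsProx (f : E → ℝ) (s : ℝ) (z p : E) : Prop :=
  ∀ u, f p + (2 * s)⁻¹ * ‖z - p‖ ^ 2 ≤ f u + (2 * s)⁻¹ * ‖z - u‖ ^ 2

/-- The Moreau envelope `M_{s f}`. The infimum is taken in `ℝ`, so the value is the junk `0` at
points where the penalized function is unbounded below; the existence of a proximal point excludes
this. -/
noncomputable def moreauEnvelope (f : E → ℝ) (s : ℝ) (z : E) : ℝ :=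
  ⨅ u, (f u + (2 * s)⁻¹ * ‖z - u‖ ^ 2)

lemma IsProx.moreauEnvelope_eq (hp : IsProx f s z p) :
    moreauEnvelope f s z = f p + (2 * s)⁻¹ * ‖z - p‖ ^ 2 :=
  IsLeast.csInf_eq ⟨⟨p, rfl⟩, Set.forall_mem_range.2 hp⟩

variable [InnerProductSpace ℝ E]

lemma IsProx.add_inner_le (hf : ConvexOn ℝ Set.univ f) (hp : IsProx f s z p) (u : E) :
    f p + s⁻¹ * ⟪z - p, u - p⟫ ≤ f u := by
  have perturbed (t : ℝ) (ht : t ∈ Set.Ioo 0 1) :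
      f p + s⁻¹ * ⟪z - p, u - p⟫ ≤ f u + t * ((2 * s)⁻¹ * ‖u - p‖ ^ 2) := by
    have hmin := hp ((1 - t) • p + t • u)
    have hseg : f ((1 - t) • p + t • u) ≤ (1 - t) * f p + t * f u :=
      hf.2 (Set.mem_univ p) (Set.mem_univ u) (sub_nonneg.2 ht.2.le) ht.1.le (sub_add_cancel 1 t)
    have hdist : ‖z - ((1 - t) • p + t • u)‖ ^ 2 =
        ‖z - p‖ ^ 2 - 2 * (t * ⟪z - p, u - p⟫) + t ^ 2 * ‖u - p‖ ^ 2 := by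
      rw [show z - ((1 - t) • p + t • u) = (z - p) - t • (u - p) by module, norm_sub_sq_real,
        real_inner_smul_right, norm_smul, mul_pow, Real.norm_eq_abs, sq_abs]
    have hinv : s⁻¹ = 2 * (2 * s)⁻¹ := by ring
    rw [hdist] at hmin
    refine le_of_mul_le_mul_left ?_ ht.1
    rw [hinv]
    linarith
  have hlim : Tendsto (fun t => f u + t * ((2 * s)⁻¹ * ‖u - p‖ ^ 2)) (𝓝[>] 0) (𝓝 (f u)) := by
    have hcont : Continuous fun t => f u + t * ((2 * s)⁻¹ * ‖u - p‖ ^ 2) := by fun_prop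
    simpa using (hcont.tendsto 0).mono_left nhdsWithin_le_nhds
  exact ge_of_tendsto hlim (mem_of_superset (Ioo_mem_nhdsGT one_pos) perturbed)

lemma IsProx.norm_sub_sq_le_inner (hf : ConvexOn ℝ Set.univ f) (hs : 0 < s)
    (hp : IsProx f s z p) (hq : IsProx f s w q) : ‖p - q‖ ^ 2 ≤ ⟪z - w, p - q⟫ := by
  have hmono : s⁻¹ * (⟪z - p, q - p⟫ + ⟪w - q, p - q⟫) ≤ 0 := by
    linarith [hp.add_inner_le hf q, hq.add_inner_le hf p]
  have hinner : ⟪z - p, q - p⟫ + ⟪w - q, p - q⟫ = ‖p - q‖ ^ 2 - ⟪z - w, p - q⟫ := by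
    rw [← neg_sub p q, inner_neg_right, ← real_inner_self_eq_norm_sq]
    simp only [inner_sub_left]
    ring
  rw [hinner] at hmono
  exact sub_nonpos.1 (nonpos_of_mul_nonpos_right hmono (inv_pos.2 hs))

lemma IsProx.norm_sub_le (hf : ConvexOn ℝ Set.univ f) (hs : 0 < s)
    (hp : IsProx f s z p) (hq : IsProx f s w q) : ‖p - q‖ ≤ ‖z - w‖ := by
  obtain h | h := (norm_nonneg (p - q)).eq_or_lt
  · exact h ▸ norm_nonneg _
  · refine le_of_mul_le_mul_right ?_ h
    calc ‖p - q‖ * ‖p - q‖ = ‖p - q‖ ^ 2 := (sq _).symm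
      _ ≤ ⟪z - w, p - q⟫ := hp.norm_sub_sq_le_inner hf hs hq
      _ ≤ ‖z - w‖ * ‖p - q‖ := real_inner_le_norm _ _

lemma continuous_of_isProx (hf : ConvexOn ℝ Set.univ f) (hs : 0 < s) {P : E → E}
    (hP : ∀ z, IsProx f s z (P z)) : Continuous P :=
  LipschitzWith.continuous (K := 1) <| .of_dist_le_mul fun z w => by
    simpa only [dist_eq_norm, NNReal.coe_one, one_mul] using (hP z).norm_sub_le hf hs (hP w)

lemma IsProx.moreauEnvelope_le (hp : IsProx f s z p) (hq : IsProx f s w q) :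
    moreauEnvelope f s w ≤
      moreauEnvelope f s z + s⁻¹ * ⟪z - p, w - z⟫ + (2 * s)⁻¹ * ‖w - z‖ ^ 2 := by
  have hdist : ‖w - p‖ ^ 2 = ‖z - p‖ ^ 2 + 2 * ⟪z - p, w - z⟫ + ‖w - z‖ ^ 2 := by
    rw [← norm_add_sq_real, add_comm, sub_add_sub_cancel]
  calc moreauEnvelope f s w = f q + (2 * s)⁻¹ * ‖w - q‖ ^ 2 := hq.moreauEnvelope_eq
    _ ≤ f p + (2 * s)⁻¹ * ‖w - p‖ ^ 2 := hq p
    _ = moreauEnvelope f s z + s⁻¹ * ⟪z - p, w - z⟫ + (2 * s)⁻¹ * ‖w - z‖ ^ 2 := by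
      rw [hp.moreauEnvelope_eq, hdist]
      ring

lemma IsProx.le_moreauEnvelope (hf : ConvexOn ℝ Set.univ f) (hs : 0 < s)
    (hp : IsProx f s z p) (hq : IsProx f s w q) :
    moreauEnvelope f s z + s⁻¹ * ⟪z - p, w - z⟫ ≤ moreauEnvelope f s w := by
  have hinner : ⟪z - p, w - z⟫ = ⟪z - p, q - p⟫ + ⟪z - p, w - q⟫ - ‖z - p‖ ^ 2 := by
    rw [← real_inner_self_eq_norm_sq, ← inner_add_right, ← inner_sub_right]
    congr 1
    abel
  have hgap : 0 ≤ (2 * s)⁻¹ * ‖(w - q) - (z - p)‖ ^ 2 := by positivity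
  calc moreauEnvelope f s z + s⁻¹ * ⟪z - p, w - z⟫
      = f p + s⁻¹ * ⟪z - p, q - p⟫ + (2 * s)⁻¹ * ‖w - q‖ ^ 2
          - (2 * s)⁻¹ * ‖(w - q) - (z - p)‖ ^ 2 := by
        rw [hp.moreauEnvelope_eq, hinner, norm_sub_sq_real (w - q),
          real_inner_comm (z - p) (w - q)]
        ring
    _ ≤ f q + (2 * s)⁻¹ * ‖w - q‖ ^ 2 := by linarith [hp.add_inner_le hf q]
    _ = moreauEnvelope f s w := hq.moreauEnvelope_eq.symm

theorem hasGradientAt_moreauEnvelope [CompleteSpace E] (hf : ConvexOn ℝ Set.univ f) (hs : 0 < s)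
    {P : E → E} (hP : ∀ z, IsProx f s z (P z)) (z : E) :
    HasGradientAt (moreauEnvelope f s) (s⁻¹ • (z - P z)) z := by
  rw [hasGradientAt_iff_isLittleO]
  refine Asymptotics.IsBigO.trans_isLittleO (g := fun w => ‖w - z‖ ^ 2) ?_
    (Asymptotics.isLittleO_pow_sub_sub z one_lt_two)
  refine .of_bound (2 * s)⁻¹ (.of_forall fun w => ?_)
  have hlower := (hP z).le_moreauEnvelope hf hs (hP w)
  have hupper := (hP z).moreauEnvelope_le (hP w)
  rw [real_inner_smul_left, norm_pow, norm_norm, Real.norm_of_nonneg] <;> linarith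

end Proximal

section FedProx

variable {ι : Type*}

lemma exists_consensus_fixedPoint_of_tendsto {X : Type*} [TopologicalSpace X] [T2Space X]
    {A : (ι → X) → X} (hA : Continuous A) {x : ℕ → ι → X} (hx : ∀ t j, x (t + 1) j = A (x t))
    {xlim : ι → X} (hlim : ∀ j, Tendsto (fun t => x t j) atTop (nhds (xlim j))) :
    ∃ y, (∀ j, xlim j = y) ∧ A (fun _ => y) = y := by
  have hlim_eq (j : ι) : xlim j = A xlim := by
    refine tendsto_nhds_unique ((tendsto_add_atTop_iff_nat 1).2 (hlim j)) ?_
    simpa only [hx, Function.comp_def] using (hA.tendsto xlim).comp (tendsto_pi_nhds.2 hlim)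
  exact ⟨A xlim, hlim_eq, congrArg A (funext hlim_eq).symm⟩

lemma sum_sub_eq_zero_of_inv_card_smul_sum_eq {𝕜 E : Type*} [DivisionRing 𝕜] [CharZero 𝕜]
    [AddCommGroup E] [Module 𝕜 E] [Fintype ι] [Nonempty ι] {v : ι → E} {y : E}
    (hy : (Fintype.card ι : 𝕜)⁻¹ • ∑ k, v k = y) : ∑ k, (y - v k) = 0 := by
  have hsum : ∑ k, v k = (Fintype.card ι : 𝕜) • y :=
    (inv_smul_eq_iff₀ (Nat.cast_ne_zero.2 Fintype.card_ne_zero)).1 hy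
  rw [sum_sub_distrib, hsum, sum_const, card_univ, Nat.cast_smul_eq_nsmul, sub_self]

theorem fedprox_fixed_points_general {E : Type*} [NormedAddCommGroup E] [InnerProductSpace ℝ E]
    [CompleteSpace E] [Fintype ι] [Nonempty ι] {f : ι → E → ℝ}
    (hconv : ∀ j, ConvexOn ℝ Set.univ (f j)) {s : ℝ} (hs : 0 < s) {prox : ι → E → E}
    (hprox : ∀ j z, IsProx (f j) s z (prox j z)) {x : ℕ → ι → E}
    (hupdate : ∀ t j, x (t + 1) j = (Fintype.card ι : ℝ)⁻¹ • ∑ k, prox k (x t k))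
    {xlim : ι → E} (hconvg : ∀ j, Tendsto (fun t => x t j) atTop (nhds (xlim j))) :
    ∃ xstar : E, (∀ j, xlim j = xstar) ∧ ∑ j, gradient (moreauEnvelope (f j) s) xstar = 0 := by
  have hcont (j : ι) : Continuous (prox j) := continuous_of_isProx (hconv j) hs (hprox j)
  have havg : Continuous fun v : ι → E => (Fintype.card ι : ℝ)⁻¹ • ∑ k, prox k (v k) := by
    fun_prop
  obtain ⟨xstar, hlim, hfix⟩ := exists_consensus_fixedPoint_of_tendsto havg hupdate hconvg
  refine ⟨xstar, hlim, ?_⟩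
  calc ∑ j, gradient (moreauEnvelope (f j) s) xstar
      = ∑ j, s⁻¹ • (xstar - prox j xstar) := sum_congr rfl fun j _ =>
        (hasGradientAt_moreauEnvelope (hconv j) hs (hprox j) xstar).gradient
    _ = s⁻¹ • ∑ j, (xstar - prox j xstar) := smul_sum.symm
    _ = 0 := by rw [sum_sub_eq_zero_of_inv_card_smul_sum_eq hfix, smul_zero]

end FedProx

/-- Fixed points of the deterministic FedProx algorithm (Proposition 2 of Pathak–Wainwright):
if the FedProx iterates `x_j^{(t+1)} = (1/m) ∑_k prox_{s f_k} (x_k^{(t)})` converge, then all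
local sequences share a common limit `x*`, and this limit satisfies
`∑_{j=1}^m ∇ M_{s f_j}(x*) = 0`, where `M_{s f_j}` is the Moreau envelope of `f_j`. -/
theorem fedprox_fixed_points
    {d m : ℕ} (hm : 0 < m)
    (f : Fin m → EuclideanSpace ℝ (Fin d) → ℝ)
    (hconv : ∀ j, ConvexOn ℝ Set.univ (f j))
    (hdiff : ∀ j, Differentiable ℝ (f j))
    (s : ℝ) (hs : 0 < s)
    (prox : Fin m → EuclideanSpace ℝ (Fin d) → EuclideanSpace ℝ (Fin d))
    (hprox : ∀ j z u, f j (prox j z) + (2 * s)⁻¹ * ‖z - prox j z‖ ^ 2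
        ≤ f j u + (2 * s)⁻¹ * ‖z - u‖ ^ 2)
    (M : Fin m → EuclideanSpace ℝ (Fin d) → ℝ)
    (hM : ∀ j z, M j z = ⨅ u : EuclideanSpace ℝ (Fin d), (f j u + (2 * s)⁻¹ * ‖z - u‖ ^ 2))
    (x : ℕ → Fin m → EuclideanSpace ℝ (Fin d))
    (hupdate : ∀ t j, x (t + 1) j = (m : ℝ)⁻¹ • ∑ k, prox k (x t k))
    (xlim : Fin m → EuclideanSpace ℝ (Fin d))
    (hconvg : ∀ j, Tendsto (fun t => x t j) atTop (nhds (xlim j))) :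
    ∃ xstar : EuclideanSpace ℝ (Fin d),
      (∀ j, xlim j = xstar) ∧
      ∑ j, gradient (M j) xstar = 0 := by
  obtain rfl : M = fun j => moreauEnvelope (f j) s := funext₂ hM
  have : NeZero m := ⟨hm.ne'⟩
  exact fedprox_fixed_points_general hconv hs hprox (by simpa using hupdate) hconvg
end

section
/- Correctness of FedSplit fixed points: Let f_1, ..., f_m : R^d -> R be convex differentiable functions and let s > 0. Suppose z* = (z*_1, ..., z*_m) in (R^d)^m satisfies, for every j in {1,...,m}, the fixed-point relation z*_j = z*_j + 2*( prox_{s f_j}(2*zbar* - z*_j) - zbar* ), where zbar* = (1/m) * sum_{j=1}^m z*_j. Then x* := zbar* is a global minimizer of the function x -> sum_{j=1}^m f_j(x) over R^d. -/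
open Filter Finset

/-!
At a fixed point every proximal value `prox_{s f_j}(2 z̄ - z_j)` equals `z̄`. Since
`(2 z̄ - z_j) - z̄ = z̄ - z_j`, optimality in the proximal problem says that `(z̄ - z_j) / s` is a
subgradient of `f_j` at `z̄`. These subgradients sum to zero because `z̄` is the average of the
`z_j`, so zero is a subgradient of `∑ f_j` at `z̄`.
-/

open scoped RealInnerProductSpace Topology

section Module

variable {E : Type*} [AddCommGroup E] [Module ℝ E]

/-- Along the segment from `p` to `y`, the slope of `h` dominates the constant `f p - f y`, by
minimality and convexity; its limit at `p` is `h'`. -/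
theorem le_add_of_isMinOn_add_of_hasLineDerivAt {C : Set E} {f h : E → ℝ} {h' : ℝ} {p y : E}
    (hf : ConvexOn ℝ C f) (hp : p ∈ C) (hy : y ∈ C) (hh : HasLineDerivAt ℝ h h' p (y - p))
    (hmin : IsMinOn (fun u => f u + h u) C p) : f p ≤ f y + h' := by
  have slope_ge : ∀ t ∈ Set.Ioo (0 : ℝ) 1, f p - f y ≤ t⁻¹ * (h (p + t • (y - p)) - h p) := by
    intro t ⟨ht₀, ht₁⟩
    have hmem : p + t • (y - p) ∈ C := hf.1.add_smul_sub_mem hp hy ⟨ht₀.le, ht₁.le⟩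
    have hopt : f p + h p ≤ f (p + t • (y - p)) + h (p + t • (y - p)) := hmin hmem
    have hseg : f (p + t • (y - p)) ≤ (1 - t) * f p + t * f y := by
      have hcomb : p + t • (y - p) = (1 - t) • p + t • y := by module
      rw [hcomb]
      exact hf.2 hp hy (sub_nonneg.2 ht₁.le) ht₀.le (sub_add_cancel 1 t)
    rw [le_inv_mul_iff₀ ht₀]
    linarith
  have slope_tendsto :
      Tendsto (fun t : ℝ => t⁻¹ * (h (p + t • (y - p)) - h p)) (𝓝[>] 0) (𝓝 h') := by
    simpa using HasDerivAt.tendsto_slope_zero_right hh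
  have : f p - f y ≤ h' :=
    ge_of_tendsto slope_tendsto <|
      mem_of_superset (Ioo_mem_nhdsGT one_pos) slope_ge
  linarith

theorem sum_sub_average_eq_zero {ι : Type*} [Fintype ι] [Nonempty ι] (z : ι → E) :
    ∑ j, ((Fintype.card ι : ℝ)⁻¹ • ∑ i, z i - z j) = 0 := by
  have hcard : (Fintype.card ι : ℝ) ≠ 0 := Nat.cast_ne_zero.2 Fintype.card_ne_zero
  rw [sum_sub_distrib, sum_const, card_univ, ← Nat.cast_smul_eq_nsmul ℝ, smul_inv_smul₀ hcard,
    sub_self]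

end Module

section InnerProductSpace

variable {E : Type*} [NormedAddCommGroup E] [InnerProductSpace ℝ E]

/-- `g` is a subgradient at `x` of `f` restricted to `C`, that is, of the function equal to `f` on
`C` and `+∞` elsewhere. -/
def HasSubgradientOn (f : E → ℝ) (g : E) (C : Set E) (x : E) : Prop :=
  ∀ y ∈ C, f x + ⟪g, y - x⟫ ≤ f y

/-- `p` is a proximal point of `z` for `f` constrained to `C`, with penalty weight `c`; for step
size `s > 0` the operator `prox_{s f}` has `c = (2 * s)⁻¹` and `C = Set.univ`. A relation rather
than a function, so that no existence or uniqueness of minimizers is presupposed. -/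
def IsProxOn (c : ℝ) (f : E → ℝ) (C : Set E) (z p : E) : Prop :=
  p ∈ C ∧ IsMinOn (fun u => f u + c * ‖z - u‖ ^ 2) C p

theorem HasSubgradientOn.sum {ι : Type*} {t : Finset ι} {f : ι → E → ℝ} {g : ι → E} {C : Set E}
    {x : E} (h : ∀ j ∈ t, HasSubgradientOn (f j) (g j) C x) :
    HasSubgradientOn (fun u => ∑ j ∈ t, f j u) (∑ j ∈ t, g j) C x := by
  intro y hy
  rw [sum_inner, ← sum_add_distrib]
  exact sum_le_sum fun j hj => h j hj y hy

theorem HasSubgradientOn.isMinOn {f : E → ℝ} {C : Set E} {x : E}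
    (h : HasSubgradientOn f 0 C x) : IsMinOn f C x := by
  intro y hy
  simpa using h y hy

theorem hasLineDerivAt_mul_norm_sub_sq (c : ℝ) (z p v : E) :
    HasLineDerivAt ℝ (fun u => c * ‖z - u‖ ^ 2) (-⟪(2 * c) • (z - p), v⟫) p v := by
  have hline : HasDerivAt (fun t : ℝ => z - (p + t • v)) (-v) 0 := by
    simpa using (((hasDerivAt_id (0 : ℝ)).smul_const v).const_add p).const_sub z
  have hderiv : -⟪(2 * c) • (z - p), v⟫ = c * (2 * ⟪z - (p + (0 : ℝ) • v), -v⟫) := by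
    rw [zero_smul, add_zero, inner_neg_right, real_inner_smul_left]
    ring
  rw [hderiv]
  exact hline.norm_sq.const_mul c

theorem IsProxOn.hasSubgradientOn {c : ℝ} {f : E → ℝ} {C : Set E} {z p : E}
    (hf : ConvexOn ℝ C f) (h : IsProxOn c f C z p) :
    HasSubgradientOn f ((2 * c) • (z - p)) C p := by
  intro y hy
  have := le_add_of_isMinOn_add_of_hasLineDerivAt hf h.1 hy
    (hasLineDerivAt_mul_norm_sub_sq c z p (y - p)) h.2
  linarith

theorem fedsplit_fixed_point_correctness_general {ι : Type*} [Fintype ι] [Nonempty ι] {c : ℝ}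
    {C : Set E} {f : ι → E → ℝ} (hconv : ∀ j, ConvexOn ℝ C (f j)) {z p : ι → E} {zbar : E}
    (hzbar : zbar = (Fintype.card ι : ℝ)⁻¹ • ∑ j, z j)
    (hprox : ∀ j, IsProxOn c (f j) C ((2 : ℝ) • zbar - z j) (p j))
    (hfix : ∀ j, z j = z j + (2 : ℝ) • (p j - zbar)) :
    zbar ∈ C ∧ IsMinOn (fun x => ∑ j, f j x) C zbar := by
  have hp : ∀ j, p j = zbar := fun j => by
    simpa [sub_eq_zero] using hfix j
  simp only [hp] at hprox
  have hsub : ∀ j, HasSubgradientOn (f j) ((2 * c) • (zbar - z j)) C zbar := fun j => by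
    have hresidual : (2 : ℝ) • zbar - z j - zbar = zbar - z j := by module
    simpa only [hresidual] using (hprox j).hasSubgradientOn (hconv j)
  have hzero : ∑ j, (2 * c) • (zbar - z j) = 0 := by
    rw [← smul_sum, hzbar, sum_sub_average_eq_zero, smul_zero]
  refine ⟨(hprox (Classical.arbitrary ι)).1, HasSubgradientOn.isMinOn ?_⟩
  simpa only [hzero] using HasSubgradientOn.sum fun j (_ : j ∈ univ) => hsub j

end InnerProductSpace

/-- Correctness of FedSplit fixed points (Proposition 3 of Pathak–Wainwright):
if `z* = (z*_1, …, z*_m)` satisfies the FedSplit fixed-point relation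
`z*_j = z*_j + 2 (prox_{s f_j}(2 z̄* - z*_j) - z̄*)` for every `j`, then the block average
`x* = z̄* = (1/m) ∑_j z*_j` is a global minimizer of `x ↦ ∑_j f_j(x)`. -/
theorem fedsplit_fixed_point_correctness
    {d m : ℕ} (hm : 0 < m)
    (f : Fin m → EuclideanSpace ℝ (Fin d) → ℝ)
    (hconv : ∀ j, ConvexOn ℝ Set.univ (f j))
    (hdiff : ∀ j, Differentiable ℝ (f j))
    (s : ℝ) (hs : 0 < s)
    (prox : Fin m → EuclideanSpace ℝ (Fin d) → EuclideanSpace ℝ (Fin d))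
    (hprox : ∀ j z u, f j (prox j z) + (2 * s)⁻¹ * ‖z - prox j z‖ ^ 2
        ≤ f j u + (2 * s)⁻¹ * ‖z - u‖ ^ 2)
    (zstar : Fin m → EuclideanSpace ℝ (Fin d))
    (zbar : EuclideanSpace ℝ (Fin d))
    (hzbar : zbar = (m : ℝ)⁻¹ • ∑ j, zstar j)
    (hfix : ∀ j, zstar j = zstar j + (2 : ℝ) • (prox j ((2 : ℝ) • zbar - zstar j) - zbar)) :
    IsMinOn (fun x => ∑ j, f j x) Set.univ zbar := by
  have : Nonempty (Fin m) := Fin.pos_iff_nonempty.1 hm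
  exact (fedsplit_fixed_point_correctness_general hconv (by simpa using hzbar)
    (fun j => ⟨Set.mem_univ _, fun u _ => hprox j _ u⟩) hfix).2
end

section
/- Contractivity of the FedSplit operator: Let f_j : R^d -> R be l_j-strongly convex and L_j-smooth for j = 1,...,m; set l* = min_j l_j, L* = max_j L_j, kappa = L*/l*, and s = 1/sqrt(l* L*). Define F(z) = sum_j f_j(z_j) on (R^d)^m, the blockwise reflected resolvent R_{sF}(z) = (2*prox_{s f_1}(z_1) - z_1, ..., 2*prox_{s f_m}(z_m) - z_m), and R_{I_E}(z) = 2*P_E(z) - z where P_E is the orthogonal projection onto the consensus subspace E = { z in (R^d)^m : z_1 = ... = z_m }. Then the composed operator T = R_{sF} o R_{I_E} satisfies ||T(z) - T(z')|| <= (1 - 2/(sqrt(kappa)+1)) * ||z - z'|| for all z, z' in (R^d)^m; in particular T is a contraction and has a unique fixed point. -/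
open Filter Finset RealInnerProductSpace

/-!
The reflection through a closed subspace is an isometry and the reflected resolvent acts block by
block, so it suffices to contract each block. There the optimality condition `w = p + s ∇f(p)` for
`p = prox_{sf}(w)` turns the reflected resolvent `w ↦ 2p - w` into `p + s ∇f(p) ↦ p - s ∇f(p)`.
For `a = p - p'` and `b = s (∇f(p) - ∇f(p'))`, the interpolation inequality for strongly convex
smooth functions reads `k (‖a‖² + ‖b‖²) ≤ (k² + 1) ⟪a, b⟫` with `k = √κ`, precisely because
`s² l* L* = 1`, and this is equivalent to `(k + 1) ‖a - b‖ ≤ (k - 1) ‖a + b‖`.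
-/

section QuadraticBounds

variable {E : Type*} [NormedAddCommGroup E] [InnerProductSpace ℝ E]
  {f : E → ℝ} {g : E → E} {μ ν M N : ℝ}

/-- The first-order form of `μ`-strong convexity of `f` with gradient field `g` (plain convexity
for `μ = 0`). The field is a separate argument, so that subtracting a quadratic from `f` and a
linear map from `g` needs no differentiability. -/
def HasQuadraticMinorant (f : E → ℝ) (g : E → E) (μ : ℝ) : Prop :=
  ∀ x y, f x + ⟪g x, y - x⟫ + μ / 2 * ‖y - x‖ ^ 2 ≤ f y

/-- The quadratic upper bound satisfied by an `M`-smooth function `f` with gradient field `g`, the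
counterpart of `HasQuadraticMinorant`. -/
def HasQuadraticMajorant (f : E → ℝ) (g : E → E) (M : ℝ) : Prop :=
  ∀ x y, f y ≤ f x + ⟪g x, y - x⟫ + M / 2 * ‖y - x‖ ^ 2

theorem HasQuadraticMinorant.mono (h : HasQuadraticMinorant f g μ) (hνμ : ν ≤ μ) :
    HasQuadraticMinorant f g ν := fun x y =>
  le_trans (by gcongr) (h x y)

theorem HasQuadraticMajorant.mono (h : HasQuadraticMajorant f g M) (hMN : M ≤ N) :
    HasQuadraticMajorant f g N := fun x y =>
  (h x y).trans (by gcongr)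

theorem HasQuadraticMinorant.le_of_hasQuadraticMajorant (hlow : HasQuadraticMinorant f g μ)
    (hup : HasQuadraticMajorant f g M) {x y : E} (hxy : x ≠ y) : μ ≤ M := by
  have hpos : 0 < ‖y - x‖ ^ 2 := pow_pos (norm_sub_pos_iff.mpr hxy.symm) 2
  have hle : μ / 2 * ‖y - x‖ ^ 2 ≤ M / 2 * ‖y - x‖ ^ 2 := by linarith [hlow x y, hup x y]
  linarith [le_of_mul_le_mul_right hle hpos]

theorem half_mul_norm_sq_eq_add (c : ℝ) (x y : E) :
    c / 2 * ‖y‖ ^ 2 = c / 2 * ‖x‖ ^ 2 + ⟪c • x, y - x⟫ + c / 2 * ‖y - x‖ ^ 2 := by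
  rw [norm_sub_sq_real, inner_sub_right, real_inner_smul_left, real_inner_smul_left,
    real_inner_self_eq_norm_sq, real_inner_comm]
  ring

theorem HasQuadraticMinorant.sub_half_mul_norm_sq (h : HasQuadraticMinorant f g μ) (c : ℝ) :
    HasQuadraticMinorant (fun x => f x - c / 2 * ‖x‖ ^ 2) (fun x => g x - c • x) (μ - c) := by
  intro x y
  rw [inner_sub_left]
  linarith [h x y, half_mul_norm_sq_eq_add c x y]

theorem HasQuadraticMajorant.sub_half_mul_norm_sq (h : HasQuadraticMajorant f g M) (c : ℝ) :
    HasQuadraticMajorant (fun x => f x - c / 2 * ‖x‖ ^ 2) (fun x => g x - c • x) (M - c) := by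
  intro x y
  rw [inner_sub_left]
  linarith [h x y, half_mul_norm_sq_eq_add c x y]

-- Compare the two bounds at the gradient step `y - t (g y - g x)`.
theorem HasQuadraticMinorant.add_mul_norm_sub_sq_le (hlow : HasQuadraticMinorant f g 0)
    (hup : HasQuadraticMajorant f g M) (x y : E) (t : ℝ) :
    f x + ⟪g x, y - x⟫ + (t - M / 2 * t ^ 2) * ‖g y - g x‖ ^ 2 ≤ f y := by
  set D := g y - g x with hD
  have hlower : f x + (⟪g x, y - x⟫ - t * ⟪g x, D⟫) ≤ f (y - t • D) := by
    have := hlow x (y - t • D)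
    rwa [sub_right_comm, inner_sub_right, real_inner_smul_right, zero_div, zero_mul,
      add_zero] at this
  have hupper : f (y - t • D) ≤ f y - t * ⟪g y, D⟫ + M / 2 * (t ^ 2 * ‖D‖ ^ 2) := by
    have := hup y (y - t • D)
    rwa [sub_sub_cancel_left, inner_neg_right, norm_neg, real_inner_smul_right, norm_smul,
      mul_pow, Real.norm_eq_abs, sq_abs, ← sub_eq_add_neg] at this
  have hsq : ‖D‖ ^ 2 = ⟪g y, D⟫ - ⟪g x, D⟫ := by
    rw [← inner_sub_left, ← hD, real_inner_self_eq_norm_sq]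
  linear_combination hlower + hupper + t * hsq

theorem HasQuadraticMinorant.norm_sub_sq_le_mul_inner (hM : 0 ≤ M)
    (hlow : HasQuadraticMinorant f g 0) (hup : HasQuadraticMajorant f g M) (x y : E) :
    ‖g x - g y‖ ^ 2 ≤ M * ⟪g x - g y, x - y⟫ := by
  have hstep (t : ℝ) : (2 * t - M * t ^ 2) * ‖g x - g y‖ ^ 2 ≤ ⟪g x - g y, x - y⟫ := by
    have hxy := hlow.add_mul_norm_sub_sq_le hup x y t
    have hyx := hlow.add_mul_norm_sub_sq_le hup y x t
    rw [norm_sub_rev, ← neg_sub x y, inner_neg_right] at hxy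
    rw [inner_sub_left]
    linarith
  rcases hM.eq_or_lt with rfl | hM
  · by_contra! hpos
    rw [zero_mul] at hpos
    obtain ⟨t, ht⟩ : ∃ t, t * ‖g x - g y‖ ^ 2 = ⟪g x - g y, x - y⟫ + 1 :=
      ⟨_, div_mul_cancel₀ _ hpos.ne'⟩
    linarith [hstep 0, hstep t]
  · have := hstep M⁻¹
    rwa [show 2 * M⁻¹ - M * M⁻¹ ^ 2 = M⁻¹ by field_simp; ring, inv_mul_le_iff₀ hM] at this

-- Cocoercivity of the gradient of `f - μ/2 ‖·‖²`, which is convex and `(M - μ)`-smooth.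
theorem HasQuadraticMinorant.mul_norm_sub_sq_add_le (hμM : μ ≤ M)
    (hlow : HasQuadraticMinorant f g μ) (hup : HasQuadraticMajorant f g M) (x y : E) :
    μ * M * ‖x - y‖ ^ 2 + ‖g x - g y‖ ^ 2 ≤ (μ + M) * ⟪g x - g y, x - y⟫ := by
  have hconvex := hlow.sub_half_mul_norm_sq μ
  rw [sub_self] at hconvex
  have hco := hconvex.norm_sub_sq_le_mul_inner (sub_nonneg.mpr hμM)
    (hup.sub_half_mul_norm_sq μ) x y
  rw [sub_sub_sub_comm, ← smul_sub, norm_sub_sq_real, inner_sub_left (g x - g y),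
    real_inner_smul_left, real_inner_smul_right, real_inner_self_eq_norm_sq, norm_smul, mul_pow,
    Real.norm_eq_abs, sq_abs] at hco
  linarith

theorem hasQuadraticMajorant_of_norm_gradient_sub_le [CompleteSpace E]
    (hg : ∀ x, HasGradientAt f (g x) x) (hM : ∀ x y, ‖g x - g y‖ ≤ M * ‖x - y‖) :
    HasQuadraticMajorant f g M := by
  intro x y
  set v := y - x with hv
  have hline (t : ℝ) : HasDerivAt (fun t : ℝ => f (x + t • v)) ⟪g (x + t • v), v⟫ t := by
    have hpath : HasDerivAt (fun t : ℝ => x + t • v) v t := by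
      simpa using ((hasDerivAt_id t).smul_const v).const_add x
    exact (hg (x + t • v)).hasFDerivAt.comp_hasDerivAt t hpath
  have hbound (t : ℝ) : HasDerivAt (fun t : ℝ => f x + t * ⟪g x, v⟫ + M / 2 * t ^ 2 * ‖v‖ ^ 2)
      (⟪g x, v⟫ + M * t * ‖v‖ ^ 2) t := by
    refine ((((hasDerivAt_id t).mul_const _).const_add (f x)).add
      (((hasDerivAt_pow 2 t).const_mul (M / 2)).mul_const (‖v‖ ^ 2))).congr_deriv ?_
    push_cast
    ring
  have hslope (t : ℝ) (ht : 0 ≤ t) : ⟪g (x + t • v), v⟫ ≤ ⟪g x, v⟫ + M * t * ‖v‖ ^ 2 := by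
    rw [← sub_le_iff_le_add', ← inner_sub_left]
    calc ⟪g (x + t • v) - g x, v⟫
        ≤ ‖g (x + t • v) - g x‖ * ‖v‖ := real_inner_le_norm _ _
      _ ≤ M * ‖x + t • v - x‖ * ‖v‖ := by gcongr; exact hM _ _
      _ = M * t * ‖v‖ ^ 2 := by
        rw [add_sub_cancel_left, norm_smul, Real.norm_of_nonneg ht]
        ring
  have := image_le_of_deriv_right_le_deriv_boundary
    (fun t _ => (hline t).continuousAt.continuousWithinAt)
    (fun t _ => (hline t).hasDerivWithinAt) (by simp)
    (fun t _ => (hbound t).continuousAt.continuousWithinAt)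
    (fun t _ => (hbound t).hasDerivWithinAt) (fun t ht => hslope t ht.1)
    (Set.right_mem_Icc.mpr zero_le_one)
  simpa [hv] using this

end QuadraticBounds

section ReflectedResolvent

variable {E : Type*} [NormedAddCommGroup E] [InnerProductSpace ℝ E]
  {f : E → ℝ} {g : E → E} {μ M s : ℝ}

/-- `p` is a value of the proximal operator `prox_{s f}` at `w`. A relation rather than a function,
as minimizers need not exist or be unique for general `f`. -/
def IsProximalPoint (f : E → ℝ) (s : ℝ) (w p : E) : Prop :=
  ∀ u, f p + (2 * s)⁻¹ * ‖w - p‖ ^ 2 ≤ f u + (2 * s)⁻¹ * ‖w - u‖ ^ 2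

theorem IsProximalPoint.eq_add_smul_gradient [CompleteSpace E] {w p G : E} (hs : s ≠ 0)
    (hp : IsProximalPoint f s w p) (hG : HasGradientAt f G p) : w = p + s • G := by
  have hmin : IsLocalMin (fun u => f u + (2 * s)⁻¹ * ‖w - u‖ ^ 2) p := Eventually.of_forall hp
  have hgrad : HasGradientAt (fun u => f u + (2 * s)⁻¹ * ‖w - u‖ ^ 2) (G - s⁻¹ • (w - p)) p := by
    refine (hG.hasFDerivAt.add
      (((hasFDerivAt_id p).const_sub w).norm_sq.const_mul (2 * s)⁻¹)).congr_fderiv ?_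
    ext v
    simp only [mul_inv_rev, id_eq, map_sub, map_smul, neg_sub, ContinuousLinearMap.comp_neg,
      ContinuousLinearMap.comp_id, add_apply, sub_apply, smul_apply, coe_innerSL_apply,
      InnerProductSpace.toDual_apply_apply, nsmul_eq_mul, Nat.cast_ofNat, smul_eq_mul]
    ring
  have hcrit : G - s⁻¹ • (w - p) = 0 :=
    (InnerProductSpace.toDual ℝ E).map_eq_zero_iff.mp (hmin.hasFDerivAt_eq_zero hgrad.hasFDerivAt)
  rw [sub_eq_zero.mp hcrit, smul_inv_smul₀ hs, add_sub_cancel]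

theorem norm_sub_le_mul_norm_add {k : ℝ} (hk : 1 ≤ k) {a b : E}
    (h : k * (‖a‖ ^ 2 + ‖b‖ ^ 2) ≤ (k ^ 2 + 1) * ⟪a, b⟫) :
    ‖a - b‖ ≤ (1 - 2 / (k + 1)) * ‖a + b‖ := by
  have hpos : 0 < k + 1 := by linarith
  have hfactor : 1 - 2 / (k + 1) = (k - 1) / (k + 1) := by field_simp; ring
  rw [hfactor, div_mul_eq_mul_div, le_div_iff₀' hpos]
  refine le_of_sq_le_sq ?_ (mul_nonneg (sub_nonneg.mpr hk) (norm_nonneg _))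
  rw [mul_pow, mul_pow, norm_sub_sq_real, norm_add_sq_real]
  linarith

theorem IsProximalPoint.norm_reflected_sub_le [CompleteSpace E] (hμ : 0 < μ) (hμM : μ ≤ M)
    (hg : ∀ x, HasGradientAt f (g x) x) (hlow : HasQuadraticMinorant f g μ)
    (hup : HasQuadraticMajorant f g M) (hs : s = 1 / √(μ * M)) {w w' p p' : E}
    (hp : IsProximalPoint f s w p) (hp' : IsProximalPoint f s w' p') :
    ‖((2 : ℝ) • p - w) - ((2 : ℝ) • p' - w')‖ ≤ (1 - 2 / (√(M / μ) + 1)) * ‖w - w'‖ := by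
  have hM : 0 < M := hμ.trans_le hμM
  have hs₀ : 0 < s := by rw [hs]; positivity
  set k := √(M / μ) with hk
  have hk₁ : 1 ≤ k := Real.one_le_sqrt.mpr ((one_le_div hμ).mpr hμM)
  have hMk : M = μ * k ^ 2 := by rw [hk, Real.sq_sqrt (by positivity)]; field_simp
  have hsk : s * (μ * k) = 1 := by
    have hsqrt : √(μ * M) = μ * k := by
      rw [hMk, show μ * (μ * k ^ 2) = (μ * k) ^ 2 by ring, Real.sqrt_sq (by positivity)]
    rw [hs, hsqrt, one_div_mul_cancel (by positivity)]
  have hinterp := hlow.mul_norm_sub_sq_add_le hμM hup p p'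
  have hw := hp.eq_add_smul_gradient hs₀.ne' (hg p)
  have hw' := hp'.eq_add_smul_gradient hs₀.ne' (hg p')
  set a := p - p' with ha
  set G := g p - g p' with hG
  rw [show ((2 : ℝ) • p - w) - ((2 : ℝ) • p' - w') = a - s • G by rw [hw, hw', ha, hG]; module,
    show w - w' = a + s • G by rw [hw, hw', ha, hG]; module]
  refine norm_sub_le_mul_norm_add hk₁ ?_
  rw [norm_smul, mul_pow, Real.norm_eq_abs, sq_abs, real_inner_smul_right, real_inner_comm]
  calc k * (‖a‖ ^ 2 + s ^ 2 * ‖G‖ ^ 2)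
      = k * s ^ 2 * (μ * M * ‖a‖ ^ 2 + ‖G‖ ^ 2) := by
        rw [hMk]
        linear_combination (-k * ‖a‖ ^ 2) * (s * (μ * k) + 1) * hsk
    _ ≤ k * s ^ 2 * ((μ + M) * ⟪G, a⟫) := by gcongr
    _ = (k ^ 2 + 1) * (s * ⟪G, a⟫) := by
        rw [hMk]
        linear_combination ((k ^ 2 + 1) * s * ⟪G, a⟫) * hsk

end ReflectedResolvent

section Consensus

variable {ι E : Type*} [Fintype ι] [NormedAddCommGroup E] [InnerProductSpace ℝ E]

variable (ι E) in
/-- The subspace of block vectors all of whose blocks agree, the feasible set of the consensus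
formulation of minimizing `∑ j, f j`. -/
def consensusSubspace : Submodule ℝ (PiLp 2 fun _ : ι => E) where
  carrier := {z | ∀ i j, z i = z j}
  zero_mem' _ _ := rfl
  add_mem' hy hz i j := congrArg₂ (· + ·) (hy i j) (hz i j)
  smul_mem' c _ hz i j := congrArg (c • ·) (hz i j)

/-- The block vector all of whose blocks are the average of the blocks of `z`; it turns out to be
the orthogonal projection of `z` onto `consensusSubspace`. -/
noncomputable def consensusMean (z : PiLp 2 fun _ : ι => E) : PiLp 2 fun _ : ι => E :=
  WithLp.toLp 2 fun _ => (Fintype.card ι : ℝ)⁻¹ • ∑ k, z k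

theorem consensusMean_mem (z : PiLp 2 fun _ : ι => E) :
    consensusMean z ∈ consensusSubspace ι E := fun _ _ => rfl

theorem sub_consensusMean_mem_orthogonal (z : PiLp 2 fun _ : ι => E) :
    z - consensusMean z ∈ (consensusSubspace ι E)ᗮ := by
  intro u hu
  rw [PiLp.inner_apply]
  rcases isEmpty_or_nonempty ι with _ | ⟨⟨i₀⟩⟩
  · exact Fintype.sum_empty _
  have : Nonempty ι := ⟨i₀⟩
  have hsum : ∑ i, (z - consensusMean z) i = 0 := by
    simp [consensusMean, sum_sub_distrib, ← Nat.cast_smul_eq_nsmul ℝ]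
  simp_rw [hu _ i₀]
  rw [← inner_sum, hsum, inner_zero_right]

instance : (consensusSubspace ι E).HasOrthogonalProjection where
  exists_orthogonal z :=
    ⟨consensusMean z, consensusMean_mem z, sub_consensusMean_mem_orthogonal z⟩

theorem consensusSubspace_reflection_apply (z : PiLp 2 fun _ : ι => E) (j : ι) :
    (consensusSubspace ι E).reflection z j =
      (2 : ℝ) • ((Fintype.card ι : ℝ)⁻¹ • ∑ k, z k) - z j := by
  rw [Submodule.reflection_apply, Submodule.eq_starProjection_of_mem_orthogonal
    (consensusMean_mem z) (sub_consensusMean_mem_orthogonal z), two_smul, two_smul]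
  rfl

end Consensus

section Contraction

theorem norm_le_mul_norm_of_forall_block {ι : Type*} [Fintype ι] {E F : ι → Type*}
    [∀ j, SeminormedAddCommGroup (E j)] [∀ j, SeminormedAddCommGroup (F j)] {c : ℝ} (hc : 0 ≤ c)
    {u : PiLp 2 E} {v : PiLp 2 F} (h : ∀ j, ‖u j‖ ≤ c * ‖v j‖) : ‖u‖ ≤ c * ‖v‖ := by
  refine le_of_sq_le_sq ?_ (mul_nonneg hc (norm_nonneg v))
  rw [mul_pow, PiLp.norm_sq_eq_of_L2, PiLp.norm_sq_eq_of_L2, mul_sum]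
  gcongr with j
  rw [← mul_pow]
  gcongr
  exact h j

theorem existsUnique_fixedPoint_of_dist_le {X : Type*} [MetricSpace X] [CompleteSpace X]
    [Nonempty X] {T : X → X} {c : ℝ} (hc : c < 1) (hT : ∀ x y, dist (T x) (T y) ≤ c * dist x y) :
    ∃! x, T x = x := by
  have hcontr : ContractingWith c.toNNReal T :=
    ⟨Real.toNNReal_lt_one.mpr hc, LipschitzWith.of_dist_le_mul fun x y =>
      (hT x y).trans (by gcongr; exact Real.le_coe_toNNReal c)⟩
  exact ⟨hcontr.fixedPoint, hcontr.fixedPoint_isFixedPt, fun _ hx => hcontr.fixedPoint_unique hx⟩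

variable {ι : Type*} [Fintype ι] {E : ι → Type*} [∀ j, NormedAddCommGroup (E j)]
  [∀ j, InnerProductSpace ℝ (E j)] [∀ j, CompleteSpace (E j)]
  {f : ∀ j, E j → ℝ} {g : ∀ j, E j → E j} {μ M s : ℝ} {prox : ∀ j, E j → E j}
  {T : PiLp 2 E → PiLp 2 E}

theorem norm_reflected_prox_sub_le (hμ : 0 < μ)
    (hg : ∀ j x, HasGradientAt (f j) (g j x) x)
    (hstrong : ∀ j, HasQuadraticMinorant (f j) (g j) μ)
    (hsmooth : ∀ j, HasQuadraticMajorant (f j) (g j) M)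
    (hs : s = 1 / √(μ * M)) (hprox : ∀ j w, IsProximalPoint (f j) s w (prox j w))
    (hT : ∀ z j, T z j = (2 : ℝ) • prox j (z j) - z j) (z z' : PiLp 2 E) :
    ‖T z - T z'‖ ≤ (1 - 2 / (√(M / μ) + 1)) * ‖z - z'‖ := by
  rcases eq_or_ne z z' with rfl | hne
  · simp only [sub_self, norm_zero, mul_zero, le_refl]
  obtain ⟨i, hi⟩ : ∃ i, z i ≠ z' i := by
    by_contra! h
    exact hne (PiLp.ext h)
  have hμM : μ ≤ M := (hstrong i).le_of_hasQuadraticMajorant (hsmooth i) hi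
  have hc : 0 ≤ 1 - 2 / (√(M / μ) + 1) := by
    have : 1 ≤ √(M / μ) := Real.one_le_sqrt.mpr ((one_le_div hμ).mpr hμM)
    rw [sub_nonneg, div_le_one (by positivity)]
    linarith
  refine norm_le_mul_norm_of_forall_block hc fun j => ?_
  rw [PiLp.sub_apply, PiLp.sub_apply, hT, hT]
  exact (hprox j (z j)).norm_reflected_sub_le hμ hμM (hg j) (hstrong j) (hsmooth j) hs
    (hprox j (z' j))

theorem fedsplit_operator_contraction_general (K : Submodule ℝ (PiLp 2 E))
    [K.HasOrthogonalProjection] (hμ : 0 < μ)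
    (hg : ∀ j x, HasGradientAt (f j) (g j x) x)
    (hstrong : ∀ j, HasQuadraticMinorant (f j) (g j) μ)
    (hsmooth : ∀ j, HasQuadraticMajorant (f j) (g j) M)
    (hs : s = 1 / √(μ * M)) (hprox : ∀ j w, IsProximalPoint (f j) s w (prox j w))
    (hT : ∀ z j, T z j = (2 : ℝ) • prox j (K.reflection z j) - K.reflection z j) :
    (∀ z z', ‖T z - T z'‖ ≤ (1 - 2 / (√(M / μ) + 1)) * ‖z - z'‖) ∧
      1 - 2 / (√(M / μ) + 1) < 1 ∧ ∃! w, T w = w := by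
  have hcontr (z z' : PiLp 2 E) : ‖T z - T z'‖ ≤ (1 - 2 / (√(M / μ) + 1)) * ‖z - z'‖ := by
    have := norm_reflected_prox_sub_le (T := T ∘ K.reflection) hμ hg hstrong hsmooth hs hprox
      (fun z j => by rw [Function.comp_apply, hT, K.reflection_reflection])
      (K.reflection z) (K.reflection z')
    rwa [Function.comp_apply, Function.comp_apply, K.reflection_reflection,
      K.reflection_reflection, ← map_sub, LinearIsometryEquiv.norm_map] at this
  have hlt : 1 - 2 / (√(M / μ) + 1) < 1 := sub_lt_self _ (by positivity)
  refine ⟨hcontr, hlt, existsUnique_fixedPoint_of_dist_le hlt fun z z' => ?_⟩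
  rw [dist_eq_norm, dist_eq_norm]
  exact hcontr z z'

end Contraction

/-- Contractivity of the FedSplit operator `T = R_{sF} ∘ R_{I_E}` (key step in the proof of
Theorem 3 of Pathak–Wainwright): with `l* = min_j l_j`, `L* = max_j L_j`, `κ = L*/l*` and
stepsize `s = 1/√(l* L*)`, the operator `T` is Lipschitz with constant `1 - 2/(√κ+1) < 1`
on `(ℝ^d)^m`, hence a contraction with a unique fixed point.  Here
`T(z)_j = 2 prox_{s f_j}((R_E z)_j) - (R_E z)_j` with `(R_E z)_j = 2 z̄ - z_j`. -/
theorem fedsplit_operator_contraction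
    {d m : ℕ} (hm : 0 < m)
    (f : Fin m → EuclideanSpace ℝ (Fin d) → ℝ)
    (hdiff : ∀ j, Differentiable ℝ (f j))
    (l L : Fin m → ℝ) (hl : ∀ j, 0 < l j)
    (hstrong : ∀ j x y, f j y ≥ f j x + ⟪gradient (f j) x, y - x⟫ + l j / 2 * ‖y - x‖ ^ 2)
    (hsmooth : ∀ j x y, ‖gradient (f j) x - gradient (f j) y‖ ≤ L j * ‖x - y‖)
    (lstar Lstar : ℝ)
    (hlstar : IsLeast (Set.range l) lstar)
    (hLstar : IsGreatest (Set.range L) Lstar)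
    (kappa : ℝ) (hkappa : kappa = Lstar / lstar)
    (s : ℝ) (hs : s = 1 / Real.sqrt (lstar * Lstar))
    (prox : Fin m → EuclideanSpace ℝ (Fin d) → EuclideanSpace ℝ (Fin d))
    (hprox : ∀ j w u, f j (prox j w) + (2 * s)⁻¹ * ‖w - prox j w‖ ^ 2
        ≤ f j u + (2 * s)⁻¹ * ‖w - u‖ ^ 2)
    (T : PiLp 2 (fun _ : Fin m => EuclideanSpace ℝ (Fin d))
       → PiLp 2 (fun _ : Fin m => EuclideanSpace ℝ (Fin d)))
    (hT : ∀ z j, T z j =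
      (2 : ℝ) • prox j ((2 : ℝ) • ((m : ℝ)⁻¹ • ∑ k, z k) - z j)
        - ((2 : ℝ) • ((m : ℝ)⁻¹ • ∑ k, z k) - z j)) :
    (∀ z z', ‖T z - T z'‖ ≤ (1 - 2 / (Real.sqrt kappa + 1)) * ‖z - z'‖) ∧
    (1 - 2 / (Real.sqrt kappa + 1) < 1) ∧
    (∃! w, T w = w) := by
  obtain ⟨j₀, hj₀⟩ := hlstar.1
  subst hkappa
  exact fedsplit_operator_contraction_general (consensusSubspace (Fin m) (EuclideanSpace ℝ (Fin d)))
    (hj₀ ▸ hl j₀) (fun j x => (hdiff j x).hasGradientAt)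
    (fun j => HasQuadraticMinorant.mono (hstrong j) (hlstar.2 ⟨j, rfl⟩))
    (fun j => (hasQuadraticMajorant_of_norm_gradient_sub_le
      (fun x => (hdiff j x).hasGradientAt) (hsmooth j)).mono (hLstar.2 ⟨j, rfl⟩))
    hs hprox
    fun z j => by simpa only [consensusSubspace_reflection_apply, Fintype.card_fin] using hT z j
end

section
/- FedGD limit for least squares: Let f_j(x) = (1/2)||A_j x - b_j||^2 with each A_j in R^{n_j x d} of full column rank, and consider FedGD with stepsize s > 0 and e >= 1 local epochs. If the matrix sum_{j=1}^m A_j^T A_j * ( sum_{k=0}^{e-1} (I - s*A_j^T A_j)^k ) is invertible and the FedGD iterates converge, then their common limit is x*_FedGD = ( sum_{j=1}^m A_j^T A_j ( sum_{k=0}^{e-1} (I - s*A_j^T A_j)^k ) )^{-1} * ( sum_{j=1}^m ( sum_{k=0}^{e-1} (I - s*A_j^T A_j)^k ) A_j^T b_j ). -/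
open Matrix Finset Filter

/-!
A limit of FedGD is a fixed point of the averaged local maps `G_k^e`, hence common to all devices,
and telescoping the local steps shows that the gradients along the local trajectories started at it
sum to zero. For a gradient `∇f x = H x - c` one step multiplies the gradient by `I - s H`, so the
gradient after `i` steps is `(I - s H)^i (H x - c)` and the stationarity condition becomes a linear
system.
-/

section GradientStep

variable {R E : Type*} [Ring R] [AddCommGroup E] [Module R E]

/-- One step of gradient descent with stepsize `s`. The gradient is passed as an arbitrary vector
field `g`; no objective function is recorded. -/
def gradientStep (s : R) (g : E → E) (x : E) : E :=
  x - s • g x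

lemma iterate_gradientStep (s : R) (g : E → E) (e : ℕ) (x : E) :
    (gradientStep s g)^[e] x = x - s • ∑ i ∈ range e, g ((gradientStep s g)^[i] x) := by
  induction e with
  | zero => simp
  | succ e ih =>
    rw [Function.iterate_succ_apply', sum_range_succ, smul_add, ← sub_sub, ← ih, gradientStep]

lemma continuous_gradientStep [TopologicalSpace E] [ContinuousSub E] [ContinuousConstSMul R E]
    (s : R) {g : E → E} (hg : Continuous g) : Continuous (gradientStep s g) :=
  continuous_id.sub (hg.const_smul s)

end GradientStep

section FedGD

variable {K E ι : Type*} [DivisionRing K] [AddCommGroup E] [Module K E] [Fintype ι]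
  {s : K} {e : ℕ} {g : ι → E → E}

/-- The FedGD recursion: `x t j` is the iterate held by device `j` after `t` communication rounds.
In each round every device takes `e` gradient steps and receives the average of the results. The
initial iterates `x 0 j` may differ between devices. -/
def IsFedGDRun (s : K) (e : ℕ) (g : ι → E → E) (x : ℕ → ι → E) : Prop :=
  ∀ t j, x (t + 1) j = (Fintype.card ι : K)⁻¹ • ∑ k, (gradientStep s (g k))^[e] (x t k)

lemma IsFedGDRun.limit_eq_average [TopologicalSpace E] [T2Space E] [IsTopologicalAddGroup E]
    [ContinuousConstSMul K E] {x : ℕ → ι → E} (hx : IsFedGDRun s e g x)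
    (hg : ∀ k, Continuous (g k)) {xlim : ι → E}
    (hlim : ∀ j, Tendsto (fun t => x t j) atTop (nhds (xlim j))) (j : ι) :
    xlim j = (Fintype.card ι : K)⁻¹ • ∑ k, (gradientStep s (g k))^[e] (xlim k) := by
  have hlocal (k : ι) : Tendsto (fun t => (gradientStep s (g k))^[e] (x t k)) atTop
      (nhds ((gradientStep s (g k))^[e] (xlim k))) :=
    (((continuous_gradientStep s (hg k)).iterate e).tendsto _).comp (hlim k)
  have hshift : Tendsto (fun t => x (t + 1) j) atTop (nhds (xlim j)) :=
    (hlim j).comp (tendsto_add_atTop_nat 1)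
  simp only [hx _ j] at hshift
  exact tendsto_nhds_unique hshift ((tendsto_finsetSum _ fun k _ => hlocal k).const_smul _)

lemma sum_gradient_iterates_eq_zero [CharZero K] [Nonempty ι] (hs : s ≠ 0) {y : E}
    (hy : y = (Fintype.card ι : K)⁻¹ • ∑ k, (gradientStep s (g k))^[e] y) :
    ∑ k, ∑ i ∈ range e, g k ((gradientStep s (g k))^[i] y) = 0 := by
  have hcard : (Fintype.card ι : K) ≠ 0 := Nat.cast_ne_zero.mpr Fintype.card_ne_zero
  rw [eq_inv_smul_iff₀ hcard] at hy
  simp only [iterate_gradientStep s (g _) e] at hy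
  rw [sum_sub_distrib, sum_const, card_univ, ← Nat.cast_smul_eq_nsmul K, ← smul_sum, eq_comm,
    sub_eq_self] at hy
  exact (smul_eq_zero_iff_right hs).mp hy

lemma IsFedGDRun.sum_gradient_iterates_limit_eq_zero [CharZero K] [TopologicalSpace E] [T2Space E]
    [IsTopologicalAddGroup E] [ContinuousConstSMul K E] {x : ℕ → ι → E} (hx : IsFedGDRun s e g x)
    (hs : s ≠ 0) (hg : ∀ k, Continuous (g k)) {xlim : ι → E}
    (hlim : ∀ j, Tendsto (fun t => x t j) atTop (nhds (xlim j))) (j : ι) :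
    ∑ k, ∑ i ∈ range e, g k ((gradientStep s (g k))^[i] (xlim j)) = 0 := by
  have : Nonempty ι := ⟨j⟩
  have hfix := hx.limit_eq_average hg hlim
  have hcommon (k : ι) : xlim k = xlim j := (hfix k).trans (hfix j).symm
  have hfix_j := hfix j
  simp only [hcommon] at hfix_j
  exact sum_gradient_iterates_eq_zero hs hfix_j

end FedGD

/-- The sum `∑_{k<e} (1 - s a)^k`, a partial sum of the Neumann series of `(s a)⁻¹`. -/
def neumannSum {R S : Type*} [CommSemiring R] [Ring S] [Algebra R S] (s : R) (a : S) (e : ℕ) : S :=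
  ∑ k ∈ range e, (1 - s • a) ^ k

lemma commute_neumannSum {R S : Type*} [CommSemiring R] [Ring S] [Algebra R S] (s : R) (a : S)
    (e : ℕ) : Commute a (neumannSum s a e) :=
  Commute.sum_right _ _ _ fun k _ =>
    ((Commute.one_right a).sub_right ((Commute.refl a).smul_right s)).pow_right k

lemma iterate_mulVec {R κ : Type*} [Semiring R] [Fintype κ] [DecidableEq κ] (B : Matrix κ κ R)
    (i : ℕ) (v : κ → R) : (B *ᵥ ·)^[i] v = B ^ i *ᵥ v := by
  induction i with
  | zero => simp
  | succ i ih => rw [Function.iterate_succ_apply', ih, mulVec_mulVec, ← pow_succ']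

section AffineGradient

variable {R κ : Type*} [CommRing R] [Fintype κ]

/-- The gradient `x ↦ H x - c` of a quadratic objective; least squares `½‖A x - b‖²` has
`H = Aᵀ A` and `c = Aᵀ b`. -/
def affineGradient (H : Matrix κ κ R) (c x : κ → R) : κ → R :=
  H *ᵥ x - c

lemma continuous_affineGradient [TopologicalSpace R] [IsTopologicalRing R] (H : Matrix κ κ R)
    (c : κ → R) : Continuous (affineGradient H c) :=
  (continuous_const.matrix_mulVec continuous_id).sub continuous_const

variable [DecidableEq κ]

lemma affineGradient_semiconj_gradientStep (s : R) (H : Matrix κ κ R) (c : κ → R) :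
    Function.Semiconj (affineGradient H c) (gradientStep s (affineGradient H c))
      ((1 - s • H) *ᵥ ·) := by
  intro x
  simp only [affineGradient, gradientStep, mulVec_sub, mulVec_smul, sub_mulVec, smul_mulVec,
    one_mulVec]
  module

lemma affineGradient_iterate_gradientStep (s : R) (H : Matrix κ κ R) (c : κ → R) (i : ℕ)
    (x : κ → R) :
    affineGradient H c ((gradientStep s (affineGradient H c))^[i] x) =
      (1 - s • H) ^ i *ᵥ affineGradient H c x := by
  rw [((affineGradient_semiconj_gradientStep s H c).iterate_right i).eq, iterate_mulVec]

lemma sum_affineGradient_iterates (s : R) (H : Matrix κ κ R) (c : κ → R) (e : ℕ) (x : κ → R) :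
    ∑ i ∈ range e, affineGradient H c ((gradientStep s (affineGradient H c))^[i] x) =
      (H * neumannSum s H e) *ᵥ x - neumannSum s H e *ᵥ c := by
  simp only [affineGradient_iterate_gradientStep]
  rw [← sum_mulVec, ← neumannSum, affineGradient, mulVec_sub, mulVec_mulVec,
    (commute_neumannSum s H e).eq]

end AffineGradient

theorem fedgd_least_squares_limit_general {K κ ι : Type*} [Field K] [CharZero K]
    [TopologicalSpace K] [IsTopologicalRing K] [T2Space K] [Fintype κ] [DecidableEq κ] [Fintype ι]
    {H : ι → Matrix κ κ K} {c : ι → κ → K} {s : K} (hs : s ≠ 0) {e : ℕ} {x : ℕ → ι → κ → K}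
    (hx : IsFedGDRun s e (fun j => affineGradient (H j) (c j)) x) {xlim : ι → κ → K}
    (hlim : ∀ j, Tendsto (fun t => x t j) atTop (nhds (xlim j)))
    (hM : IsUnit (∑ j, H j * neumannSum s (H j) e)) (j : ι) :
    xlim j = (∑ j, H j * neumannSum s (H j) e)⁻¹ *ᵥ ∑ j, neumannSum s (H j) e *ᵥ c j := by
  have hstat := hx.sum_gradient_iterates_limit_eq_zero hs
    (fun k => continuous_affineGradient (H k) (c k)) hlim j
  simp only [sum_affineGradient_iterates] at hstat
  rw [sum_sub_distrib, ← sum_mulVec, sub_eq_zero] at hstat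
  have := hM.invertible
  exact (inv_mulVec_eq_vec hstat.symm).symm

/-- FedGD limit for least squares: for `f_j(x) = ½‖A_j x - b_j‖²` with full-column-rank
design matrices, if the matrix `∑_j A_jᵀA_j (∑_{k=0}^{e-1} (I - s A_jᵀA_j)^k)` is invertible
and the FedGD iterates converge, then their common limit is
`x*_FedGD = (∑_j A_jᵀA_j ∑_{k<e} (I - s A_jᵀA_j)^k)⁻¹ (∑_j (∑_{k<e} (I - s A_jᵀA_j)^k) A_jᵀ b_j)`. -/
theorem fedgd_least_squares_limit
    {d m : ℕ} (hm : 0 < m)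
    (n : Fin m → ℕ)
    (A : ∀ j, Matrix (Fin (n j)) (Fin d) ℝ)
    (b : ∀ j, Fin (n j) → ℝ)
    (hrank : ∀ j, Function.Injective ((A j).mulVec))
    (s : ℝ) (hs : 0 < s)
    (e : ℕ) (he : 1 ≤ e)
    (G : Fin m → (Fin d → ℝ) → (Fin d → ℝ))
    (hG : ∀ j x, G j x = x - s • ((A j)ᵀ.mulVec ((A j).mulVec x - b j)))
    (x : ℕ → Fin m → Fin d → ℝ)
    (hupdate : ∀ t j, x (t + 1) j = (m : ℝ)⁻¹ • ∑ k, (G k)^[e] (x t k))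
    (xlim : Fin m → Fin d → ℝ)
    (hconv : ∀ j, Tendsto (fun t => x t j) atTop (nhds (xlim j)))
    (M : Matrix (Fin d) (Fin d) ℝ)
    (hMdef : M = ∑ j, ((A j)ᵀ * A j) *
      ∑ k ∈ Finset.range e, ((1 : Matrix (Fin d) (Fin d) ℝ) - s • ((A j)ᵀ * A j)) ^ k)
    (hMinv : IsUnit M) :
    ∀ j, xlim j = M⁻¹.mulVec (∑ j,
      (∑ k ∈ Finset.range e, ((1 : Matrix (Fin d) (Fin d) ℝ) - s • ((A j)ᵀ * A j)) ^ k).mulVec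
        ((A j)ᵀ.mulVec (b j))) := by
  have hstep : G = fun j => gradientStep s (affineGradient ((A j)ᵀ * A j) ((A j)ᵀ *ᵥ b j)) := by
    funext j y
    rw [hG, gradientStep, affineGradient, mulVec_sub, mulVec_mulVec]
  subst hstep hMdef
  exact fedgd_least_squares_limit_general hs.ne'
    (fun t j => by rw [hupdate, Fintype.card_fin]) hconv hMinv
end
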